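/- arXiv:2302.00532 — 2 statements merged into one kernel-verified Lean document; each statement's English description precedes it below -/
import Mathlib

section
/- Let 0<q<1 and 0<α<1. Then for every real z with 0<z<(1−q)^{−α}, one has e_{α,1}(−z;q) ≤ 1/(1+Γ_q(α+1)^{−1}·z). -/
open scoped BigOperators

/-- The infinite q-Pochhammer symbol `(a;q)_∞ = ∏_{j=0}^∞ (1 - q^j a)`. -/
noncomputable def qPochInf (q a : ℝ) : ℝ := ∏' j : ℕ, (1 - q ^ j * a)

/-- The q-gamma function `Γ_q(x) = ((q;q)_∞/(q^x;q)_∞)·(1-q)^{1-x}`. -/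
noncomputable def qGamma (q x : ℝ) : ℝ :=
  (qPochInf q q / qPochInf q (q ^ x)) * (1 - q) ^ (1 - x)

/-- The q-Mittag-Leffler function `e_{α,β}(z;q) = ∑_{k=0}^∞ z^k/Γ_q(αk+β)`. -/
noncomputable def qML (q α β z : ℝ) : ℝ := ∑' k : ℕ, z ^ k / qGamma q (α * k + β)

/-!
Put `t = q ^ α` and `U x = ∑ (q t^k; q)_∞ x^k`, which is `e_{α,1}` up to scaling. By q-binomial
summation, `(y t^(k+1); q)_∞ = (y t^k; q)_∞ ∑ m, r m * y^m * (t^k)^m`, where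
`r m = (t; q)_m / (q; q)_m`, so every series `F x = ∑ (y t^k; q)_∞ x^k` solves the q-integral
equation `F x = F 0 + x ∑ m, r m * y^m * F (t^m x)`.

For `y ≤ t` each weight is at most `t` times the previous one. Subtracting the equations at `x` and
at `t x` then expresses `F x`, for `x ≤ 0`, as a positive combination of the values `F (t^m x)` with
`m ≥ 1`; as these tend to `F 0 > 0`, it follows that `F x ≥ 0`.
For `y = t` this reads `(U x - U (t x)) / x ≥ 0`, so `U x ≤ U (t x) ≤ U (t² x) ≤ ⋯` when `x < 0`.
Inserting this into the equation for `U` (the case `y = q`) gives the bound.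
-/

open Filter Topology

lemma forall_of_eventually_of_forall_gt {P : ℕ → Prop} (hP : ∀ᶠ n in atTop, P n)
    (hstep : ∀ n, (∀ m > n, P m) → P n) (n : ℕ) : P n := by
  obtain ⟨N, hN⟩ := eventually_atTop.1 hP
  refine Nat.decreasingInduction (motive := fun k _ => ∀ m ≥ k, P m) (fun k _ ih m hm => ?_) hN
    N.zero_le n n.zero_le
  obtain rfl | hlt := hm.eq_or_lt
  · exact hstep k ih
  · exact ih m hlt

/-- The sum `∑ a_k x^k` of a real power series, with junk value `0` where it diverges. -/
noncomputable def powerSum (a : ℕ → ℝ) (x : ℝ) : ℝ := ∑' k, a k * x ^ k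

section PowerSum

variable {a s : ℕ → ℝ} {x t : ℝ}

lemma abs_pow_le_one_of_abs_le_one (ht : |t| ≤ 1) (n : ℕ) : |t ^ n| ≤ 1 :=
  abs_pow t n ▸ pow_le_one₀ (abs_nonneg t) ht

lemma abs_pow_mul_lt_one (ht : |t| ≤ 1) (hx : |x| < 1) (n : ℕ) : |t ^ n * x| < 1 :=
  (abs_mul _ x).trans_lt <|
    (mul_le_of_le_one_left (abs_nonneg x) (abs_pow_le_one_of_abs_le_one ht n)).trans_lt hx

lemma summable_mul_pow_of_abs_le {C : ℝ} (ha : ∀ k, |a k| ≤ C) (hx : |x| < 1) :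
    Summable fun k => a k * x ^ k := by
  refine .of_norm_bounded ((summable_geometric_of_lt_one (abs_nonneg x) hx).mul_left C) fun k => ?_
  rw [Real.norm_eq_abs, abs_mul, abs_pow]
  gcongr
  exact ha k

lemma abs_mul_mul_pow_le (a : ℕ → ℝ) (x : ℝ) (ht : |t| ≤ 1) (k : ℕ) :
    |a k * (t * x) ^ k| ≤ |a k * x ^ k| := by
  rw [abs_mul, abs_mul, abs_pow, abs_pow, abs_mul]
  gcongr
  exact mul_le_of_le_one_left (abs_nonneg x) ht

lemma summable_mul_mul_pow (ha : Summable fun k => a k * x ^ k) (ht : |t| ≤ 1) :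
    Summable fun k => a k * (t * x) ^ k :=
  .of_norm_bounded ha.abs (abs_mul_mul_pow_le a x ht)

lemma abs_powerSum_mul_le (ha : Summable fun k => a k * x ^ k) (ht : |t| ≤ 1) :
    |powerSum a (t * x)| ≤ ∑' k, |a k * x ^ k| :=
  tsum_of_norm_bounded (f := fun k => a k * (t * x) ^ k) ha.abs.hasSum (abs_mul_mul_pow_le a x ht)

lemma powerSum_zero (a : ℕ → ℝ) : powerSum a 0 = a 0 := by
  rw [powerSum, tsum_eq_single 0 fun k hk => by simp [hk], pow_zero, mul_one]

lemma powerSum_eq_add_mul (ha : Summable fun k => a k * x ^ k) :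
    powerSum a x = a 0 + x * powerSum (fun k => a (k + 1)) x := by
  simp only [powerSum, ha.tsum_eq_zero_add, ← tsum_mul_left, pow_zero, mul_one, pow_succ',
    mul_left_comm]

lemma powerSum_sub_powerSum_mul (ha : Summable fun k => a k * x ^ k) (ht : |t| ≤ 1) :
    powerSum a x - powerSum a (t * x) =
      x * powerSum (fun k => a (k + 1) * (1 - t ^ (k + 1))) x := by
  have hat := summable_mul_mul_pow ha ht
  rw [powerSum, powerSum, ← ha.tsum_sub hat, (ha.sub hat).tsum_eq_zero_add, powerSum,
    ← tsum_mul_left]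
  simp only [pow_zero, sub_self, zero_add]
  exact tsum_congr fun k => by ring

lemma tendsto_powerSum_pow_mul (ha : Summable fun k => a k * x ^ k) (ht : |t| < 1) :
    Tendsto (fun n : ℕ => powerSum a (t ^ n * x)) atTop (𝓝 (a 0)) := by
  have hpow : Tendsto (fun n : ℕ => t ^ n * x) atTop (𝓝 0) := by
    simpa only [zero_mul] using (tendsto_pow_atTop_nhds_zero_of_abs_lt_one ht).mul_const x
  rw [← powerSum_zero a]
  refine tendsto_tsum_of_dominated_convergence ha.abs
    (fun k => (hpow.pow k).const_mul (a k)) (Eventually.of_forall fun n => ?_)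
  exact abs_mul_mul_pow_le a x (abs_pow_le_one_of_abs_le_one ht.le n)

lemma summable_mul_powerSum (hs : Summable s) (ha : Summable fun k => a k * x ^ k)
    (ht : |t| ≤ 1) : Summable fun m => s m * powerSum a (t ^ m * x) := by
  refine .of_norm_bounded (hs.abs.mul_right (∑' k, |a k * x ^ k|)) fun m => ?_
  rw [Real.norm_eq_abs, abs_mul]
  gcongr
  exact abs_powerSum_mul_le ha (abs_pow_le_one_of_abs_le_one ht m)

end PowerSum

section MomentRatio

/-- The ratios `a (k + 1) / a k` are the moments `∑ m, s m * (t ^ k) ^ m` of the weights `s` placed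
at the points `t ^ m`. This turns `∑ a_k x^k` into a solution of the q-integral equation
`powerSum_eq_add_mul_tsum` with base `t`. -/
def HasMomentRatio (t : ℝ) (s a : ℕ → ℝ) : Prop :=
  ∀ k, a (k + 1) = a k * powerSum s (t ^ k)

variable {a s : ℕ → ℝ} {x t : ℝ}

lemma powerSum_eq_add_mul_tsum (hs : Summable s) (ha : Summable fun k => a k * x ^ k)
    (ht : |t| ≤ 1) (hr : HasMomentRatio t s a) :
    powerSum a x = a 0 + x * ∑' m, s m * powerSum a (t ^ m * x) := by
  have hsum : Summable (Function.uncurry fun k m => s m * (a k * (t ^ m * x) ^ k)) := by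
    refine .of_norm_bounded (summable_mul_of_summable_norm ha.norm hs.norm).abs fun ⟨k, m⟩ => ?_
    rw [Function.uncurry_apply_pair, Real.norm_eq_abs, mul_comm (s m), abs_mul, abs_mul _ (s m)]
    exact mul_le_mul_of_nonneg_right
      (abs_mul_mul_pow_le a x (abs_pow_le_one_of_abs_le_one ht m) k) (abs_nonneg _)
  rw [powerSum_eq_add_mul ha]
  congr 2
  calc powerSum (fun k => a (k + 1)) x = ∑' k, ∑' m, s m * (a k * (t ^ m * x) ^ k) := by
        refine tsum_congr fun k => ?_
        beta_reduce
        rw [hr k, powerSum, mul_right_comm, ← tsum_mul_left]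
        exact tsum_congr fun m => by ring
    _ = ∑' m, s m * powerSum a (t ^ m * x) := by
        rw [← hsum.tsum_comm]
        exact tsum_congr fun m => tsum_mul_left

lemma one_sub_mul_powerSum (hs : Summable s) (ha : Summable fun k => a k * x ^ k)
    (ht : |t| ≤ 1) (hr : HasMomentRatio t s a) :
    (1 - s 0 * x) * powerSum a x = powerSum a (t * x) -
      x * ∑' m, (t * s m - s (m + 1)) * powerSum a (t ^ (m + 1) * x) := by
  have hat := summable_mul_mul_pow ha ht
  have hFx := summable_mul_powerSum hs ha ht
  have hFtx := summable_mul_powerSum hs hat ht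
  have hdiff : ∑' m, (t * s m - s (m + 1)) * powerSum a (t ^ (m + 1) * x) =
      t * ∑' m, s m * powerSum a (t ^ m * (t * x)) -
        ∑' m, s (m + 1) * powerSum a (t ^ (m + 1) * x) := by
    rw [← tsum_mul_left, ← (hFtx.mul_left t).tsum_sub ((summable_nat_add_iff 1).2 hFx)]
    refine tsum_congr fun m => ?_
    rw [pow_succ, mul_assoc (t ^ m)]
    ring
  have hx := powerSum_eq_add_mul_tsum hs ha ht hr
  rw [hFx.tsum_eq_zero_add, pow_zero, one_mul] at hx
  rw [hdiff]
  linear_combination hx - powerSum_eq_add_mul_tsum hs hat ht hr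

lemma powerSum_nonneg_of_nonpos (hs0 : ∀ m, 0 ≤ s m) (hst : ∀ m, s (m + 1) ≤ t * s m)
    (ha0 : 0 < a 0) (ha : Summable fun k => a k * x ^ k) (ht0 : 0 ≤ t) (ht1 : t < 1)
    (hr : HasMomentRatio t s a) (hx : x ≤ 0) : 0 ≤ powerSum a x := by
  have hs : Summable s := summable_of_ratio_norm_eventually_le ht1 <| .of_forall fun m => by
    simpa only [Real.norm_of_nonneg (hs0 _)] using hst m
  have ht : |t| < 1 := (abs_of_nonneg ht0).trans_lt ht1
  suffices ∀ n : ℕ, 0 ≤ powerSum a (t ^ n * x) by simpa using this 0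
  refine forall_of_eventually_of_forall_gt
    ((tendsto_powerSum_pow_mul ha ht).eventually_const_le ha0) fun n hn => ?_
  have hxn : t ^ n * x ≤ 0 := mul_nonpos_of_nonneg_of_nonpos (by positivity) hx
  have hpos : 0 < 1 - s 0 * (t ^ n * x) := by
    linarith [mul_nonpos_of_nonneg_of_nonpos (hs0 0) hxn]
  have hlater (m : ℕ) : 0 ≤ powerSum a (t ^ (m + 1) * (t ^ n * x)) := by
    rw [← mul_assoc, ← pow_add]
    exact hn _ (by lia)
  have hnext := hlater 0
  have htail : 0 ≤ ∑' m, (t * s m - s (m + 1)) * powerSum a (t ^ (m + 1) * (t ^ n * x)) :=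
    tsum_nonneg fun m => mul_nonneg (sub_nonneg.2 (hst m)) (hlater m)
  refine nonneg_of_mul_nonneg_right ?_ hpos
  rw [one_sub_mul_powerSum hs (summable_mul_mul_pow ha ?_) ht.le hr]
  · rw [zero_add, pow_one] at hnext
    linarith [mul_nonpos_of_nonpos_of_nonneg hxn htail]
  · exact abs_pow_le_one_of_abs_le_one ht.le n

lemma powerSum_le_div_of_forall_le (hs0 : ∀ m, 0 ≤ s m) (hs : Summable s)
    (ha : Summable fun k => a k * x ^ k) (ht : |t| ≤ 1) (hr : HasMomentRatio t s a) (hx : x ≤ 0)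
    (hle : ∀ n : ℕ, powerSum a x ≤ powerSum a (t ^ n * x)) :
    powerSum a x ≤ a 0 / (1 - (∑' m, s m) * x) := by
  have hsx : (∑' m, s m) * x ≤ 0 := mul_nonpos_of_nonneg_of_nonpos (tsum_nonneg hs0) hx
  have hsum : (∑' m, s m) * powerSum a x ≤ ∑' m, s m * powerSum a (t ^ m * x) := by
    rw [← tsum_mul_right]
    exact (hs.mul_right _).tsum_le_tsum (fun m => mul_le_mul_of_nonneg_left (hle m) (hs0 m))
      (summable_mul_powerSum hs ha ht)
  rw [le_div_iff₀ (by linarith)]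
  linarith [powerSum_eq_add_mul_tsum hs ha ht hr, mul_le_mul_of_nonpos_left hsum hx]

end MomentRatio

section QPochhammer

variable {q a x : ℝ}

lemma summable_neg_pow_mul (hq : |q| < 1) (a : ℝ) : Summable fun j : ℕ => -(q ^ j * a) :=
  ((summable_geometric_of_abs_lt_one hq).mul_right a).neg

lemma tendsto_prod_qPochInf (hq : |q| < 1) (a : ℝ) :
    Tendsto (fun n => ∏ j ∈ Finset.range n, (1 - q ^ j * a)) atTop (𝓝 (qPochInf q a)) := by
  simpa only [qPochInf, sub_eq_add_neg] using
    (multipliable_one_add_of_summable (summable_neg_pow_mul hq a).norm).hasProd.tendsto_prod_nat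

lemma one_sub_pow_mul_pos (hq : |q| ≤ 1) (ha : |a| < 1) (j : ℕ) : 0 < 1 - q ^ j * a :=
  sub_pos.2 (lt_of_abs_lt (abs_pow_mul_lt_one hq ha j))

lemma qPochInf_pos (hq : |q| < 1) (ha : |a| < 1) : 0 < qPochInf q a := by
  have hexp := Real.rexp_tsum_eq_tprod
    (fun j => by simpa only [sub_eq_add_neg] using one_sub_pow_mul_pos hq.le ha j)
    (Real.summable_log_one_add_of_summable (summable_neg_pow_mul hq a))
  simp only [qPochInf, sub_eq_add_neg, ← hexp, Real.exp_pos]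

lemma qPochInf_le_one (hq0 : 0 ≤ q) (hq1 : q < 1) (ha0 : 0 ≤ a) (ha1 : a ≤ 1) :
    qPochInf q a ≤ 1 := by
  have hq : |q| < 1 := (abs_of_nonneg hq0).trans_lt hq1
  refine le_of_tendsto' (tendsto_prod_qPochInf hq a) fun n => ?_
  refine Finset.prod_le_one (fun j _ => sub_nonneg.2 ?_) fun j _ => sub_le_self 1 (by positivity)
  exact mul_le_one₀ (pow_le_one₀ hq0 hq1.le) ha0 ha1

lemma qPochInf_eq_one_sub_mul (hq : |q| < 1) (a : ℝ) :
    qPochInf q a = (1 - a) * qPochInf q (q * a) := by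
  refine tendsto_nhds_unique ((tendsto_prod_qPochInf hq a).comp (tendsto_add_atTop_nat 1))
    (((tendsto_prod_qPochInf hq (q * a)).const_mul (1 - a)).congr fun n => ?_)
  simp only [Function.comp_apply, Finset.prod_range_succ', pow_succ, pow_zero, one_mul, mul_assoc,
    mul_comm (1 - a)]

/-- The coefficient `(a;q)_m / (q;q)_m` of `x^m` in the q-binomial series
`(ax;q)_∞ / (x;q)_∞`. -/
noncomputable def qBinomialCoeff (q a : ℝ) (m : ℕ) : ℝ :=
  ∏ j ∈ Finset.range m, (1 - q ^ j * a) / (1 - q ^ (j + 1))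

lemma qBinomialCoeff_zero (q a : ℝ) : qBinomialCoeff q a 0 = 1 := Finset.prod_range_zero _

lemma one_sub_pow_succ_pos (hq : |q| < 1) (m : ℕ) : 0 < 1 - q ^ (m + 1) :=
  pow_succ q m ▸ one_sub_pow_mul_pos hq.le hq m

lemma qBinomialCoeff_succ_mul (hq : |q| < 1) (a : ℝ) (m : ℕ) :
    qBinomialCoeff q a (m + 1) * (1 - q ^ (m + 1)) = qBinomialCoeff q a m * (1 - q ^ m * a) := by
  rw [qBinomialCoeff, Finset.prod_range_succ, mul_assoc,
    div_mul_cancel₀ _ (one_sub_pow_succ_pos hq m).ne', qBinomialCoeff]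

lemma qBinomialCoeff_pos (hq : |q| < 1) (ha : |a| < 1) (m : ℕ) : 0 < qBinomialCoeff q a m :=
  Finset.prod_pos fun j _ => div_pos (one_sub_pow_mul_pos hq.le ha j) (one_sub_pow_succ_pos hq j)

lemma qBinomialCoeff_succ_le (hq0 : 0 ≤ q) (hq1 : q < 1) (hqa : q ≤ a) (ha1 : a < 1) (m : ℕ) :
    qBinomialCoeff q a (m + 1) ≤ qBinomialCoeff q a m := by
  have hq : |q| < 1 := (abs_of_nonneg hq0).trans_lt hq1
  have ha : |a| < 1 := (abs_of_nonneg (hq0.trans hqa)).trans_lt ha1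
  refine le_of_mul_le_mul_right ?_ (one_sub_pow_succ_pos hq m)
  rw [qBinomialCoeff_succ_mul hq, pow_succ]
  have := (qBinomialCoeff_pos hq ha m).le
  gcongr

lemma exists_abs_qBinomialCoeff_le (hq : |q| < 1) (a : ℝ) :
    ∃ C, ∀ m, |qBinomialCoeff q a m| ≤ C := by
  have hlim : Tendsto (qBinomialCoeff q a) atTop (𝓝 (qPochInf q a / qPochInf q q)) := by
    refine ((tendsto_prod_qPochInf hq a).div (tendsto_prod_qPochInf hq q)
      (qPochInf_pos hq hq).ne').congr fun m => ?_
    simp only [Pi.div_apply, qBinomialCoeff, Finset.prod_div_distrib, pow_succ]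
  obtain ⟨C, hC⟩ := hlim.abs.bddAbove_range
  exact ⟨C, fun m => hC ⟨m, rfl⟩⟩

lemma summable_qBinomialCoeff_mul_pow (hq : |q| < 1) (a : ℝ) (hx : |x| < 1) :
    Summable fun m => qBinomialCoeff q a m * x ^ m :=
  let ⟨_, hC⟩ := exists_abs_qBinomialCoeff_le hq a
  summable_mul_pow_of_abs_le hC hx

lemma one_sub_mul_powerSum_qBinomialCoeff (hq : |q| < 1) (a : ℝ) (hx : |x| < 1) :
    (1 - x) * powerSum (qBinomialCoeff q a) x =
      (1 - a * x) * powerSum (qBinomialCoeff q a) (q * x) := by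
  have hs := summable_qBinomialCoeff_mul_pow hq a hx
  have hsq := summable_mul_mul_pow hs hq.le
  have hquot : powerSum (fun m => qBinomialCoeff q a (m + 1) * (1 - q ^ (m + 1))) x =
      powerSum (qBinomialCoeff q a) x - a * powerSum (qBinomialCoeff q a) (q * x) := by
    simp only [qBinomialCoeff_succ_mul hq, powerSum]
    rw [← tsum_mul_left, ← hs.tsum_sub (hsq.mul_left a)]
    exact tsum_congr fun m => by ring
  linear_combination powerSum_sub_powerSum_mul hs hq.le + x * hquot

theorem powerSum_qBinomialCoeff_mul_qPochInf (hq : |q| < 1) (a : ℝ) (hx : |x| < 1) :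
    powerSum (qBinomialCoeff q a) x * qPochInf q x = qPochInf q (a * x) := by
  set G := powerSum (qBinomialCoeff q a)
  have hiter (n : ℕ) : G x * ∏ j ∈ Finset.range n, (1 - q ^ j * x) =
      (∏ j ∈ Finset.range n, (1 - q ^ j * (a * x))) * G (q ^ n * x) := by
    induction n with
    | zero => simp
    | succ n ih =>
      have hstep := one_sub_mul_powerSum_qBinomialCoeff hq a (abs_pow_mul_lt_one hq.le hx n)
      rw [Finset.prod_range_succ, Finset.prod_range_succ, ← mul_assoc, ih, pow_succ', mul_assoc q]
      linear_combination (∏ j ∈ Finset.range n, (1 - q ^ j * (a * x))) * hstep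
  have hlhs := (tendsto_prod_qPochInf hq x).const_mul (G x)
  have hrhs := (tendsto_prod_qPochInf hq (a * x)).mul
    (tendsto_powerSum_pow_mul (summable_qBinomialCoeff_mul_pow hq a hx) hq)
  rw [tendsto_nhds_unique hlhs (hrhs.congr fun n => (hiter n).symm), qBinomialCoeff_zero, mul_one]

end QPochhammer

section QPochhammerSeries

variable {q t x y : ℝ}

lemma summable_qPochInf_mul_pow (hq0 : 0 ≤ q) (hq1 : q < 1) (ht0 : 0 ≤ t) (ht1 : t ≤ 1)
    (hy0 : 0 ≤ y) (hy1 : y < 1) (hx : |x| < 1) :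
    Summable fun k : ℕ => qPochInf q (y * t ^ k) * x ^ k := by
  have hq : |q| < 1 := (abs_of_nonneg hq0).trans_lt hq1
  refine summable_mul_pow_of_abs_le (C := 1) (fun k => ?_) hx
  have hyk0 : 0 ≤ y * t ^ k := by positivity
  have hyk1 : y * t ^ k < 1 := (mul_le_of_le_one_right hy0 (pow_le_one₀ ht0 ht1)).trans_lt hy1
  rw [abs_of_pos (qPochInf_pos hq ((abs_of_nonneg hyk0).trans_lt hyk1))]
  exact qPochInf_le_one hq0 hq1 hyk0 hyk1.le

lemma hasMomentRatio_qPochInf (hq : |q| < 1) (ht : |t| ≤ 1) (hy : |y| < 1) :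
    HasMomentRatio t (fun m => qBinomialCoeff q t m * y ^ m)
      (fun k => qPochInf q (y * t ^ k)) := by
  intro k
  have hyk : |y * t ^ k| < 1 := mul_comm y _ ▸ abs_pow_mul_lt_one ht hy k
  have hmoment : powerSum (fun m => qBinomialCoeff q t m * y ^ m) (t ^ k) =
      powerSum (qBinomialCoeff q t) (y * t ^ k) := by
    simp only [powerSum, mul_pow, mul_assoc]
  beta_reduce
  rw [hmoment, mul_comm (qPochInf q _), powerSum_qBinomialCoeff_mul_qPochInf hq t hyk, pow_succ',
    mul_left_comm]

lemma powerSum_qPochInf_nonneg (hq0 : 0 ≤ q) (hq1 : q < 1) (hqt : q ≤ t) (ht1 : t < 1)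
    (hy0 : 0 ≤ y) (hyt : y ≤ t) (hx0 : x ≤ 0) (hx : |x| < 1) :
    0 ≤ powerSum (fun k => qPochInf q (y * t ^ k)) x := by
  have ht0 := hq0.trans hqt
  have hq : |q| < 1 := (abs_of_nonneg hq0).trans_lt hq1
  have ht : |t| < 1 := (abs_of_nonneg ht0).trans_lt ht1
  have hy : |y| < 1 := (abs_of_nonneg hy0).trans_lt (hyt.trans_lt ht1)
  have hr0 (m : ℕ) : 0 ≤ qBinomialCoeff q t m := (qBinomialCoeff_pos hq ht m).le
  refine powerSum_nonneg_of_nonpos (s := fun m => qBinomialCoeff q t m * y ^ m)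
    (fun m => mul_nonneg (hr0 m) (by positivity)) (fun m => ?_)
    (by simpa using qPochInf_pos hq hy)
    (summable_qPochInf_mul_pow hq0 hq1 ht0 ht1.le hy0 (hyt.trans_lt ht1) hx) ht0 ht1
    (hasMomentRatio_qPochInf hq ht.le hy) hx0
  calc qBinomialCoeff q t (m + 1) * y ^ (m + 1)
      ≤ qBinomialCoeff q t m * (y ^ m * t) := by
        rw [pow_succ]
        have := hr0 m
        gcongr
        exact qBinomialCoeff_succ_le hq0 hq1 hqt ht1 m
    _ = t * (qBinomialCoeff q t m * y ^ m) := by ring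

lemma powerSum_qPochInf_sub (hq0 : 0 ≤ q) (hq1 : q < 1) (ht0 : 0 ≤ t) (ht1 : t ≤ 1)
    (hx : |x| < 1) :
    powerSum (fun k => qPochInf q (q * t ^ k)) x -
      powerSum (fun k => qPochInf q (q * t ^ k)) (t * x) =
        x * powerSum (fun k => qPochInf q (t * t ^ k)) x := by
  have hq : |q| < 1 := (abs_of_nonneg hq0).trans_lt hq1
  rw [powerSum_sub_powerSum_mul (summable_qPochInf_mul_pow hq0 hq1 ht0 ht1 hq0 hq1 hx)
    ((abs_of_nonneg ht0).trans_le ht1)]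
  simp only [← pow_succ', qPochInf_eq_one_sub_mul hq (t ^ _), mul_comm (1 - t ^ _)]

lemma powerSum_qPochInf_le_mul (hq0 : 0 ≤ q) (hq1 : q < 1) (hqt : q ≤ t) (ht1 : t < 1)
    (hx0 : x ≤ 0) (hx : |x| < 1) :
    powerSum (fun k => qPochInf q (q * t ^ k)) x ≤
      powerSum (fun k => qPochInf q (q * t ^ k)) (t * x) := by
  have ht0 := hq0.trans hqt
  rw [← sub_nonpos, powerSum_qPochInf_sub hq0 hq1 ht0 ht1.le hx]
  exact mul_nonpos_of_nonpos_of_nonneg hx0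
    (powerSum_qPochInf_nonneg hq0 hq1 hqt ht1 ht0 le_rfl hx0 hx)

lemma powerSum_qPochInf_le_pow_mul (hq0 : 0 ≤ q) (hq1 : q < 1) (hqt : q ≤ t) (ht1 : t < 1)
    (hx0 : x ≤ 0) (hx : |x| < 1) (n : ℕ) :
    powerSum (fun k => qPochInf q (q * t ^ k)) x ≤
      powerSum (fun k => qPochInf q (q * t ^ k)) (t ^ n * x) := by
  have ht0 := hq0.trans hqt
  induction n with
  | zero => rw [pow_zero, one_mul]
  | succ n ih =>
    have hxn0 : t ^ n * x ≤ 0 := mul_nonpos_of_nonneg_of_nonpos (by positivity) hx0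
    have hxn : |t ^ n * x| < 1 := abs_pow_mul_lt_one ((abs_of_nonneg ht0).trans_le ht1.le) hx n
    rw [pow_succ', mul_assoc]
    exact ih.trans (powerSum_qPochInf_le_mul hq0 hq1 hqt ht1 hxn0 hxn)

theorem powerSum_qPochInf_le (hq0 : 0 ≤ q) (hq1 : q < 1) (hqt : q ≤ t) (ht1 : t < 1)
    (hx0 : x ≤ 0) (hx : |x| < 1) :
    powerSum (fun k => qPochInf q (q * t ^ k)) x ≤
      qPochInf q q / (1 - qPochInf q (q * t) / qPochInf q q * x) := by
  have ht0 := hq0.trans hqt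
  have hq : |q| < 1 := (abs_of_nonneg hq0).trans_lt hq1
  have ht : |t| < 1 := (abs_of_nonneg ht0).trans_lt ht1
  have hweights : ∑' m, qBinomialCoeff q t m * q ^ m = qPochInf q (q * t) / qPochInf q q := by
    rw [eq_div_iff (qPochInf_pos hq hq).ne', mul_comm q]
    exact powerSum_qBinomialCoeff_mul_qPochInf hq t hq
  have hbound := powerSum_le_div_of_forall_le
    (fun m => mul_nonneg (qBinomialCoeff_pos hq ht m).le (pow_nonneg hq0 m))
    (summable_qBinomialCoeff_mul_pow hq t hq)
    (summable_qPochInf_mul_pow hq0 hq1 ht0 ht1.le hq0 hq1 hx) ht.le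
    (hasMomentRatio_qPochInf hq ht.le hq) hx0
    (powerSum_qPochInf_le_pow_mul hq0 hq1 hqt ht1 hx0 hx)
  rwa [hweights, pow_zero, mul_one] at hbound

end QPochhammerSeries

section QMittagLeffler

variable {q : ℝ}

lemma inv_qGamma (hq1 : q < 1) (x : ℝ) :
    (qGamma q x)⁻¹ = qPochInf q (q ^ x) / qPochInf q q * (1 - q) ^ (x - 1) := by
  rw [qGamma, mul_inv, inv_div, ← Real.rpow_neg (sub_pos.2 hq1).le, neg_sub]

lemma qML_eq_powerSum (hq0 : 0 < q) (hq1 : q < 1) (α β z : ℝ) :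
    qML q α β z = (1 - q) ^ (β - 1) / qPochInf q q *
      powerSum (fun k => qPochInf q (q ^ β * (q ^ α) ^ k)) ((1 - q) ^ α * z) := by
  have h1q : 0 < 1 - q := sub_pos.2 hq1
  rw [qML, powerSum, ← tsum_mul_left]
  refine tsum_congr fun k => ?_
  have hbase : q ^ (α * k + β) = q ^ β * (q ^ α) ^ k := by
    rw [Real.rpow_add hq0, Real.rpow_mul_natCast hq0.le, mul_comm]
  have hscale : (1 - q) ^ (α * k + β - 1) = (1 - q) ^ (β - 1) * ((1 - q) ^ α) ^ k := by
    rw [add_sub_assoc, Real.rpow_add h1q, Real.rpow_mul_natCast h1q.le, mul_comm]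
  rw [div_eq_mul_inv, inv_qGamma hq1, hbase, hscale]
  ring

theorem qML_upper_bound_general (hq0 : 0 < q) (hq1 : q < 1) {α : ℝ} (hα0 : 0 < α) (hα1 : α ≤ 1)
    {z : ℝ} (hz0 : 0 ≤ z) (hz1 : z < (1 - q) ^ (-α)) :
    qML q α 1 (-z) ≤ 1 / (1 + (qGamma q (α + 1))⁻¹ * z) := by
  have h1q : 0 < 1 - q := sub_pos.2 hq1
  have hP : 0 < qPochInf q q := by
    have hq : |q| < 1 := by rwa [abs_of_pos hq0]
    exact qPochInf_pos hq hq
  have hqt : q ≤ q ^ α := by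
    simpa only [Real.rpow_one] using Real.rpow_le_rpow_of_exponent_ge hq0 hq1.le hα1
  have hw0 : 0 ≤ (1 - q) ^ α * z := by positivity
  have hw1 : (1 - q) ^ α * z < 1 := by
    rwa [Real.rpow_neg h1q.le, ← mul_one (_)⁻¹, lt_inv_mul_iff₀ (by positivity)] at hz1
  have hbound := powerSum_qPochInf_le hq0.le hq1 hqt (Real.rpow_lt_one hq0.le hq1 hα0)
    (neg_nonpos.2 hw0) (by rwa [abs_neg, abs_of_nonneg hw0])
  have hΓ : (qGamma q (α + 1))⁻¹ = qPochInf q (q * q ^ α) / qPochInf q q * (1 - q) ^ α := by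
    rw [inv_qGamma hq1, add_sub_cancel_right, Real.rpow_add hq0, Real.rpow_one, mul_comm q]
  rw [qML_eq_powerSum hq0 hq1, sub_self, Real.rpow_zero, Real.rpow_one, mul_neg, hΓ, mul_assoc,
    one_div_mul_eq_div, div_le_iff₀ hP, one_div_mul_eq_div]
  rwa [mul_neg, sub_neg_eq_add] at hbound

end QMittagLeffler

theorem qML_upper_bound (q α : ℝ) (hq0 : 0 < q) (hq1 : q < 1)
    (hα0 : 0 < α) (hα1 : α < 1) :
    ∀ z : ℝ, 0 < z → z < (1 - q) ^ (-α) →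
      qML q α 1 (-z) ≤ 1 / (1 + (qGamma q (α + 1))⁻¹ * z) :=
  fun _ hz0 hz1 => qML_upper_bound_general hq0 hq1 hα0 hα1.le hz0.le hz1
end

section
/- Let 0<q<1 and 0<α<1. Then for every real z with 0<z<(1−q)^{−α}, one has (Γ_q(α+1)^{−1}·z)/(1+Γ_q(α+1)^{−1}·z) ≤ 1 − e_{α,1}(−z;q) < 1. -/
open scoped BigOperators

open Filter Topology

/-!
Put `r = q ^ α`, `w = (1 - q) ^ α * z` and `c k = (r ^ k * q; q)_∞ / (q; q)_∞`, so that
`e_{α,1}(-z; q) = S(w)` with `S(w) = ∑ c k * (-w) ^ k`. Expanding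
`(a * r ^ k * q; q)_∞ / (r ^ k * q; q)_∞` by the q-binomial theorem and exchanging the order of
summation turns a shift of the coefficients `c` into a relation between the values of `S` along
the sequence `w * r ^ n`.

For `a = r⁻¹` this reads `(1 + w) * S(w) = κ + ∑ e n * S(w * r ^ (n + 1))` with `κ, e n ≥ 0` and
`κ + ∑ e n = 1`. Since `S(w * r ^ m) → 1`, positivity propagates from large `m` down to `m = 0`,
and a minimum principle for the differences shows that `m ↦ S(w * r ^ m)` increases.

For `a = r` it reads `1 - S(w) = w * ∑ b n * S(w * r ^ n)` with `b n ≥ 0` and `∑ b n = c 1`,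
whence `1 - S(w) ≥ w * c 1 * S(w)`.
-/

section PowerSeries

variable {𝕜 : Type*} [NormedField 𝕜] [CompleteSpace 𝕜]

theorem tendsto_tsum_mul_pow_geometric {c : ℕ → 𝕜} {x t : 𝕜}
    (hc : Summable fun n ↦ ‖c n * x ^ n‖) (ht : ‖t‖ < 1) :
    Tendsto (fun N : ℕ ↦ ∑' n, c n * (x * t ^ N) ^ n) atTop (𝓝 (c 0)) := by
  have h_zero : ∑' n, c n * (0 : 𝕜) ^ n = c 0 := by
    rw [tsum_eq_single 0 fun n hn ↦ by simp [hn]]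
    simp
  have h_scale : Tendsto (fun N : ℕ ↦ x * t ^ N) atTop (𝓝 0) := by
    simpa using (tendsto_pow_atTop_nhds_zero_of_norm_lt_one ht).const_mul x
  rw [← h_zero]
  refine tendsto_tsum_of_dominated_convergence hc (fun n ↦ (h_scale.pow n).const_mul _)
    (.of_forall fun N n ↦ ?_)
  simp only [norm_mul, norm_pow]
  gcongr
  exact mul_le_of_le_one_right (norm_nonneg x) (pow_le_one₀ (norm_nonneg t) ht.le)

end PowerSeries

section BackwardRecursion

variable {F v e : ℕ → ℝ} {κ L : ℝ}

theorem pos_of_backward_recursion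
    (hF : ∀ m, HasSum (fun n ↦ e n * F (m + n + 1)) ((1 + v m) * F m - κ))
    (he : ∀ n, 0 ≤ e n) (he_zero : 0 < e 0) (hκ : 0 ≤ κ) (hv : ∀ m, 0 ≤ v m)
    (hlim : Tendsto F atTop (𝓝 L)) (hL : 0 < L) (m : ℕ) : 0 < F m := by
  induction m using Nat.strong_decreasing_induction with
  | base =>
    obtain ⟨N, hN⟩ := eventually_atTop.1 (hlim.eventually_const_lt hL)
    exact ⟨N, fun m hm ↦ hN m hm.le⟩
  | step m ih =>
    have h_first : e 0 * F (m + 0 + 1) ≤ (1 + v m) * F m - κ :=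
      le_hasSum (hF m) 0 fun n _ ↦ mul_nonneg (he n) (ih _ (by lia)).le
    have h_next : 0 < e 0 * F (m + 0 + 1) := mul_pos he_zero (ih _ (by lia))
    exact pos_of_mul_pos_right (by linarith) (by linarith [hv m] : 0 ≤ 1 + v m)

theorem exists_neg_forall_le_of_tendsto_zero {u : ℕ → ℝ} (hu : Tendsto u atTop (𝓝 0)) {m : ℕ}
    (hm : u m < 0) : ∃ k, u k < 0 ∧ ∀ n, u k ≤ u n := by
  have h_far : ∀ᶠ n in cocompact ℕ, u m ≤ u n := by
    rw [cocompact_eq_cofinite, Nat.cofinite_eq_atTop]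
    exact hu.eventually_const_le hm
  obtain ⟨k, hk⟩ := (continuous_of_discreteTopology (f := u)).exists_forall_le' m h_far
  exact ⟨k, (hk m).trans_lt hm, hk⟩

theorem monotone_of_backward_recursion {E : ℝ}
    (hF : ∀ m, HasSum (fun n ↦ e n * F (m + n + 1)) ((1 + v m) * F m - κ))
    (he : ∀ n, 0 ≤ e n) (hE : HasSum e E) (hE_le : E ≤ 1) (hv_pos : ∀ m, 0 < v m)
    (hv : Antitone v) (hF_nonneg : ∀ m, 0 ≤ F m) (hlim : Tendsto F atTop (𝓝 L)) :
    Monotone F := by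
  let D : ℕ → ℝ := fun n ↦ F (n + 1) - F n
  have hD_lim : Tendsto D atTop (𝓝 0) := by
    simpa using (hlim.comp (tendsto_add_atTop_nat 1)).sub hlim
  by_contra h_not
  obtain ⟨j, hj⟩ : ∃ j, D j < 0 := by
    by_contra! h
    exact h_not (monotone_nat_of_le_succ fun n ↦ sub_nonneg.1 (h n))
  obtain ⟨m, hm_neg, hm_min⟩ := exists_neg_forall_le_of_tendsto_zero hD_lim hj
  have hD_sum : HasSum (fun n ↦ e n * D (m + n + 1))
      ((1 + v (m + 1)) * F (m + 1) - (1 + v m) * F m) := by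
    have h_diff := (hF (m + 1)).sub (hF m)
    simp only [← mul_sub, sub_sub_sub_cancel_right, Nat.add_right_comm m 1] at h_diff
    exact h_diff
  have h_lower : E * D m ≤ (1 + v (m + 1)) * F (m + 1) - (1 + v m) * F m :=
    hasSum_le (fun n ↦ mul_le_mul_of_nonneg_left (hm_min _) (he n)) (hE.mul_right _) hD_sum
  have h_upper : (1 + v (m + 1)) * F (m + 1) - (1 + v m) * F m ≤ (1 + v m) * D m := by
    have := mul_le_mul_of_nonneg_right (hv m.le_succ) (hF_nonneg (m + 1))
    simp only [D]
    linarith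
  have h_weight : 1 + v m ≤ E := (mul_le_mul_right_of_neg hm_neg).1 (h_lower.trans h_upper)
  linarith [hv_pos m]

end BackwardRecursion

section Pochhammer

/-- The finite q-Pochhammer symbol `(a;q)_n`. -/
noncomputable def qPoch (q a : ℝ) (n : ℕ) : ℝ := ∏ j ∈ Finset.range n, (1 - q ^ j * a)

variable {q a : ℝ}

theorem qPoch_succ (n : ℕ) : qPoch q a (n + 1) = qPoch q a n * (1 - q ^ n * a) :=
  Finset.prod_range_succ _ n

theorem qPoch_succ' (n : ℕ) : qPoch q a (n + 1) = (1 - a) * qPoch q (q * a) n := by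
  simp only [qPoch, Finset.prod_range_succ', pow_succ, mul_assoc, pow_zero, one_mul]
  exact mul_comm _ _

theorem pow_mul_le_one (hq₀ : 0 ≤ q) (hq₁ : q ≤ 1) (ha : a ≤ 1) (j : ℕ) : q ^ j * a ≤ 1 :=
  (mul_le_mul_of_nonneg_left ha (pow_nonneg hq₀ j)).trans
    (by simpa using pow_le_one₀ hq₀ hq₁)

theorem qPoch_nonneg (hq₀ : 0 ≤ q) (hq₁ : q ≤ 1) (ha : a ≤ 1) (n : ℕ) : 0 ≤ qPoch q a n :=
  Finset.prod_nonneg fun j _ ↦ sub_nonneg.2 (pow_mul_le_one hq₀ hq₁ ha j)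

theorem qPoch_le_one (hq₀ : 0 ≤ q) (hq₁ : q ≤ 1) (ha₀ : 0 ≤ a) (ha₁ : a ≤ 1) (n : ℕ) :
    qPoch q a n ≤ 1 :=
  Finset.prod_le_one (fun j _ ↦ sub_nonneg.2 (pow_mul_le_one hq₀ hq₁ ha₁ j))
    fun j _ ↦ sub_le_self _ (by positivity)

theorem abs_pow_mul_lt_one_s13 (hq : |q| ≤ 1) (ha : |a| < 1) (j : ℕ) : |q ^ j * a| < 1 := by
  rw [abs_mul, abs_pow]
  exact (mul_le_of_le_one_left (abs_nonneg a) (pow_le_one₀ (abs_nonneg q) hq)).trans_lt ha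

theorem one_sub_pow_mul_ne_zero (hq : |q| ≤ 1) (ha : |a| < 1) (j : ℕ) : 1 - q ^ j * a ≠ 0 :=
  (sub_pos.2 (abs_lt.1 (abs_pow_mul_lt_one_s13 hq ha j)).2).ne'

theorem qPoch_ne_zero (hq : |q| ≤ 1) (ha : |a| < 1) (n : ℕ) : qPoch q a n ≠ 0 :=
  Finset.prod_ne_zero_iff.2 fun j _ ↦ one_sub_pow_mul_ne_zero hq ha j

theorem summable_norm_neg_pow_mul (hq : |q| < 1) (a : ℝ) :
    Summable fun j : ℕ ↦ ‖-(q ^ j * a)‖ := by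
  simpa only [norm_neg] using ((summable_geometric_of_abs_lt_one hq).mul_right a).norm

theorem tendsto_qPoch (hq : |q| < 1) (a : ℝ) :
    Tendsto (qPoch q a) atTop (𝓝 (qPochInf q a)) := by
  have h_mult := multipliable_one_add_of_summable (summable_norm_neg_pow_mul hq a)
  simp only [← sub_eq_add_neg] at h_mult
  exact h_mult.hasProd.tendsto_prod_nat

theorem qPochInf_ne_zero (hq : |q| < 1) (ha : |a| < 1) : qPochInf q a ≠ 0 := by
  simpa only [qPochInf, sub_eq_add_neg] using
    tprod_one_add_ne_zero_of_summable (f := fun j : ℕ ↦ -(q ^ j * a))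
      (fun j ↦ by simpa only [sub_eq_add_neg] using one_sub_pow_mul_ne_zero hq.le ha j)
      (summable_norm_neg_pow_mul hq a)

theorem qPochInf_nonneg (hq₀ : 0 ≤ q) (hq₁ : q < 1) (ha : a ≤ 1) : 0 ≤ qPochInf q a :=
  ge_of_tendsto' (tendsto_qPoch (abs_lt.2 ⟨by linarith, hq₁⟩) a) (qPoch_nonneg hq₀ hq₁.le ha)

theorem qPochInf_le_one_s13 (hq₀ : 0 ≤ q) (hq₁ : q < 1) (ha₀ : 0 ≤ a) (ha₁ : a ≤ 1) :
    qPochInf q a ≤ 1 :=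
  le_of_tendsto' (tendsto_qPoch (abs_lt.2 ⟨by linarith, hq₁⟩) a) (qPoch_le_one hq₀ hq₁.le ha₀ ha₁)

end Pochhammer

section QBinomial

/-- The coefficient `(a;q)_n / (q;q)_n` of the q-binomial series. -/
noncomputable def qBinomCoeff (q a : ℝ) (n : ℕ) : ℝ := qPoch q a n / qPoch q q n

variable {q a x : ℝ}

@[simp]
theorem qBinomCoeff_zero : qBinomCoeff q a 0 = 1 := by simp [qBinomCoeff, qPoch]

theorem qBinomCoeff_succ_mul (hq : |q| < 1) (n : ℕ) :
    qBinomCoeff q a (n + 1) * (1 - q ^ (n + 1)) = qBinomCoeff q a n * (1 - q ^ n * a) := by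
  have h_den := qPoch_ne_zero hq.le hq n
  have h_factor := one_sub_pow_mul_ne_zero hq.le hq n
  rw [qBinomCoeff, qBinomCoeff, qPoch_succ, qPoch_succ, pow_succ]
  field_simp

theorem qBinomCoeff_nonneg (hq₀ : 0 ≤ q) (hq₁ : q ≤ 1) (ha : a ≤ 1) (n : ℕ) :
    0 ≤ qBinomCoeff q a n :=
  div_nonneg (qPoch_nonneg hq₀ hq₁ ha n) (qPoch_nonneg hq₀ hq₁ hq₁ n)

theorem qBinomCoeff_succ_nonpos (hq₀ : 0 ≤ q) (hq₁ : q ≤ 1) (ha : 1 ≤ a) (hqa : q * a ≤ 1) (n : ℕ) :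
    qBinomCoeff q a (n + 1) ≤ 0 := by
  rw [qBinomCoeff, qPoch_succ']
  exact div_nonpos_of_nonpos_of_nonneg
    (mul_nonpos_of_nonpos_of_nonneg (sub_nonpos.2 ha) (qPoch_nonneg hq₀ hq₁ hqa n))
    (qPoch_nonneg hq₀ hq₁ hq₁ (n + 1))

theorem summable_norm_qBinomCoeff_mul_pow (hq : |q| < 1) (a : ℝ) (hx : |x| < 1) :
    Summable fun n ↦ ‖qBinomCoeff q a n * x ^ n‖ := by
  have h_lim : Tendsto (qBinomCoeff q a) atTop (𝓝 (qPochInf q a / qPochInf q q)) :=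
    (tendsto_qPoch hq a).div (tendsto_qPoch hq q) (qPochInf_ne_zero hq hq)
  have h_bigO := (h_lim.isBigO_one ℝ).mul (Asymptotics.isBigO_refl (fun n ↦ x ^ n) atTop)
  simp only [one_mul] at h_bigO
  exact summable_of_isBigO_nat (summable_geometric_of_abs_lt_one hx).norm h_bigO.norm_norm

theorem one_sub_mul_tsum_qBinomCoeff (hq : |q| < 1) (a : ℝ) (hx : |x| < 1) :
    (1 - x) * ∑' n, qBinomCoeff q a n * x ^ n =
      (1 - a * x) * ∑' n, qBinomCoeff q a n * (q * x) ^ n := by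
  have hqx : |q * x| < 1 := by simpa using abs_pow_mul_lt_one_s13 hq.le hx 1
  have h_sum := (summable_norm_qBinomCoeff_mul_pow hq a hx).of_norm
  have h_sum_q := (summable_norm_qBinomCoeff_mul_pow hq a hqx).of_norm
  have h_diff : ∑' n, (qBinomCoeff q a n * x ^ n - qBinomCoeff q a n * (q * x) ^ n) =
      ∑' n, (x * (qBinomCoeff q a n * x ^ n) - a * x * (qBinomCoeff q a n * (q * x) ^ n)) := by
    rw [(h_sum.sub h_sum_q).tsum_eq_zero_add]
    simp only [pow_zero, sub_self, zero_add, mul_pow]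
    refine tsum_congr fun n ↦ ?_
    linear_combination x ^ (n + 1) * qBinomCoeff_succ_mul (a := a) hq n
  rw [h_sum.tsum_sub h_sum_q, (h_sum.mul_left x).tsum_sub (h_sum_q.mul_left (a * x)),
    tsum_mul_left, tsum_mul_left] at h_diff
  linarith

theorem tsum_qBinomCoeff_mul_qPoch (hq : |q| < 1) (a : ℝ) (hx : |x| < 1) (N : ℕ) :
    (∑' n, qBinomCoeff q a n * x ^ n) * qPoch q x N =
      qPoch q (a * x) N * ∑' n, qBinomCoeff q a n * (x * q ^ N) ^ n := by
  induction N with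
  | zero => simp [qPoch]
  | succ N ih =>
    have h_step := one_sub_mul_tsum_qBinomCoeff hq a (abs_pow_mul_lt_one_s13 hq.le hx N)
    rw [qPoch_succ, qPoch_succ, ← mul_assoc, ih, show x * q ^ (N + 1) = q * (q ^ N * x) by ring,
      mul_comm x]
    linear_combination qPoch q (a * x) N * h_step

theorem hasSum_qBinomCoeff_mul_pow (hq : |q| < 1) (a : ℝ) (hx : |x| < 1) :
    HasSum (fun n ↦ qBinomCoeff q a n * x ^ n) (qPochInf q (a * x) / qPochInf q x) := by
  have h_sum := summable_norm_qBinomCoeff_mul_pow hq a hx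
  have h_left := (tendsto_qPoch hq x).const_mul (∑' n, qBinomCoeff q a n * x ^ n)
  have h_right := (tendsto_qPoch hq (a * x)).mul (tendsto_tsum_mul_pow_geometric h_sum hq)
  simp only [tsum_qBinomCoeff_mul_qPoch hq a hx] at h_left
  have h_limit := tendsto_nhds_unique h_left h_right
  rw [qBinomCoeff_zero, mul_one] at h_limit
  rw [← eq_div_of_mul_eq (qPochInf_ne_zero hq hx) h_limit]
  exact h_sum.of_norm.hasSum

end QBinomial

section QMLSeries

/-- The normalised coefficient `(r ^ k * q; q)_∞ / (q; q)_∞` of the q-Mittag-Leffler series; for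
`r = q ^ α` it is `1 / Γ_q(α k + 1)` up to the factor `(1 - q) ^ (α k)`. -/
noncomputable def qMLCoeff (q r : ℝ) (k : ℕ) : ℝ := qPochInf q (r ^ k * q) / qPochInf q q

/-- The q-Mittag-Leffler function `e_{α,1}(· ; q)` in the variables `r = q ^ α` and
`x = (1 - q) ^ α * z`, in which its disc of convergence is the unit disc. -/
noncomputable def qMLSeries (q r x : ℝ) : ℝ := ∑' k, qMLCoeff q r k * x ^ k

variable {q r a x : ℝ}

theorem qMLCoeff_zero (hq : |q| < 1) : qMLCoeff q r 0 = 1 := by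
  simp [qMLCoeff, qPochInf_ne_zero hq hq]

theorem qMLCoeff_nonneg (hq₀ : 0 ≤ q) (hq₁ : q < 1) (hr₀ : 0 ≤ r) (hr₁ : r ≤ 1) (k : ℕ) :
    0 ≤ qMLCoeff q r k :=
  div_nonneg (qPochInf_nonneg hq₀ hq₁ (pow_mul_le_one hr₀ hr₁ hq₁.le k))
    (qPochInf_nonneg hq₀ hq₁ hq₁.le)

theorem qMLCoeff_le (hq₀ : 0 ≤ q) (hq₁ : q < 1) (hr₀ : 0 ≤ r) (hr₁ : r ≤ 1) (k : ℕ) :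
    qMLCoeff q r k ≤ (qPochInf q q)⁻¹ := by
  rw [qMLCoeff, div_eq_mul_inv]
  exact mul_le_of_le_one_left (inv_nonneg.2 (qPochInf_nonneg hq₀ hq₁ hq₁.le))
    (qPochInf_le_one_s13 hq₀ hq₁ (by positivity) (pow_mul_le_one hr₀ hr₁ hq₁.le k))

theorem summable_norm_qMLCoeff_mul_pow (hq₀ : 0 ≤ q) (hq₁ : q < 1) (hr₀ : 0 ≤ r) (hr₁ : r ≤ 1)
    (hx : |x| < 1) : Summable fun k ↦ ‖qMLCoeff q r k * x ^ k‖ := by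
  refine .of_nonneg_of_le (fun _ ↦ norm_nonneg _) (fun k ↦ ?_)
    ((summable_geometric_of_abs_lt_one hx).norm.mul_left (qPochInf q q)⁻¹)
  rw [norm_mul, Real.norm_of_nonneg (qMLCoeff_nonneg hq₀ hq₁ hr₀ hr₁ k)]
  exact mul_le_mul_of_nonneg_right (qMLCoeff_le hq₀ hq₁ hr₀ hr₁ k) (norm_nonneg _)

theorem hasSum_qMLSeries (hq₀ : 0 ≤ q) (hq₁ : q < 1) (hr₀ : 0 ≤ r) (hr₁ : r ≤ 1)
    (hx : |x| < 1) : HasSum (fun k ↦ qMLCoeff q r k * x ^ k) (qMLSeries q r x) :=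
  (summable_norm_qMLCoeff_mul_pow hq₀ hq₁ hr₀ hr₁ hx).of_norm.hasSum

theorem tendsto_qMLSeries_mul_pow (hq₀ : 0 ≤ q) (hq₁ : q < 1) (hr₀ : 0 ≤ r) (hr₁ : r < 1)
    (hx : |x| < 1) : Tendsto (fun m : ℕ ↦ qMLSeries q r (x * r ^ m)) atTop (𝓝 1) := by
  rw [← qMLCoeff_zero (q := q) (r := r) (abs_lt.2 ⟨by linarith, hq₁⟩)]
  exact tendsto_tsum_mul_pow_geometric (summable_norm_qMLCoeff_mul_pow hq₀ hq₁ hr₀ hr₁.le hx)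
    (abs_lt.2 ⟨by linarith, hr₁⟩)

theorem abs_mul_pow_lt_one (hr₀ : 0 ≤ r) (hr₁ : r ≤ 1) (hx : |x| < 1) (n : ℕ) :
    |x * r ^ n| < 1 := by
  rw [mul_comm]
  exact abs_pow_mul_lt_one_s13 (abs_le.2 ⟨by linarith, hr₁⟩) hx n

theorem summable_qBinomCoeff_mul_qMLCoeff (hq₀ : 0 ≤ q) (hq₁ : q < 1) (hr₀ : 0 ≤ r) (hr₁ : r ≤ 1)
    (a : ℝ) (hx : |x| < 1) : Summable fun p : ℕ × ℕ ↦
      qBinomCoeff q a p.1 * q ^ p.1 * (qMLCoeff q r p.2 * (x * r ^ p.1) ^ p.2) := by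
  have hq : |q| < 1 := abs_lt.2 ⟨by linarith, hq₁⟩
  refine .of_norm_bounded ((summable_norm_qBinomCoeff_mul_pow hq a hq).mul_of_nonneg
    (summable_norm_qMLCoeff_mul_pow hq₀ hq₁ hr₀ hr₁ hx) (fun _ ↦ norm_nonneg _)
    fun _ ↦ norm_nonneg _) fun ⟨n, k⟩ ↦ ?_
  simp only [norm_mul, norm_pow, Real.norm_of_nonneg hr₀]
  gcongr
  exact mul_le_of_le_one_right (norm_nonneg x) (pow_le_one₀ hr₀ hr₁)

theorem hasSum_qBinomCoeff_mul_qMLCoeff (hq : |q| < 1) (hr : |r| ≤ 1) (a x : ℝ) (k : ℕ) :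
    HasSum (fun n ↦ qBinomCoeff q a n * q ^ n * (qMLCoeff q r k * (x * r ^ n) ^ k))
      (qPochInf q (a * (r ^ k * q)) / qPochInf q q * x ^ k) := by
  have hk : |r ^ k * q| < 1 := abs_pow_mul_lt_one_s13 hr hq k
  have h_binom := (hasSum_qBinomCoeff_mul_pow hq a hk).mul_right (qMLCoeff q r k * x ^ k)
  have h_value : qPochInf q (a * (r ^ k * q)) / qPochInf q (r ^ k * q) *
      (qMLCoeff q r k * x ^ k) = qPochInf q (a * (r ^ k * q)) / qPochInf q q * x ^ k := by
    rw [qMLCoeff, ← mul_assoc, div_mul_div_cancel₀ (qPochInf_ne_zero hq hk)]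
  rw [h_value] at h_binom
  exact h_binom.congr_fun fun n ↦ by ring

/- Both sides are iterated sums of one double series; summing over `n` first is the q-binomial
theorem at `r ^ k * q`. -/
theorem hasSum_qBinomCoeff_mul_qMLSeries (hq₀ : 0 ≤ q) (hq₁ : q < 1) (hr₀ : 0 ≤ r) (hr₁ : r ≤ 1)
    (hx : |x| < 1) {s : ℝ}
    (hs : HasSum (fun k ↦ qPochInf q (a * (r ^ k * q)) / qPochInf q q * x ^ k) s) :
    HasSum (fun n ↦ qBinomCoeff q a n * q ^ n * qMLSeries q r (x * r ^ n)) s := by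
  obtain ⟨t, h_double⟩ := summable_qBinomCoeff_mul_qMLCoeff hq₀ hq₁ hr₀ hr₁ a hx
  have h_rows := h_double.prod_fiberwise fun n ↦
    (hasSum_qMLSeries hq₀ hq₁ hr₀ hr₁ (abs_mul_pow_lt_one hr₀ hr₁ hx n)).mul_left
      (qBinomCoeff q a n * q ^ n)
  have h_swap : HasSum (fun p : ℕ × ℕ ↦
      qBinomCoeff q a p.2 * q ^ p.2 * (qMLCoeff q r p.1 * (x * r ^ p.2) ^ p.1)) t :=
    (Equiv.prodComm ℕ ℕ).hasSum_iff.2 h_double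
  have h_cols := h_swap.prod_fiberwise <| hasSum_qBinomCoeff_mul_qMLCoeff
    (abs_lt.2 ⟨by linarith, hq₁⟩) (abs_le.2 ⟨by linarith, hr₁⟩) a x
  rwa [h_cols.unique hs] at h_rows

theorem hasSum_qMLSeries_forward (hq₀ : 0 ≤ q) (hq₁ : q < 1) (hr₀ : 0 ≤ r) (hr₁ : r ≤ 1)
    (hx : |x| < 1) (hx₀ : x ≠ 0) :
    HasSum (fun n ↦ qBinomCoeff q r n * q ^ n * qMLSeries q r (x * r ^ n))
      ((qMLSeries q r x - 1) / x) := by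
  refine hasSum_qBinomCoeff_mul_qMLSeries hq₀ hq₁ hr₀ hr₁ hx ?_
  have h_tail := ((hasSum_nat_add_iff' 1).2 (hasSum_qMLSeries hq₀ hq₁ hr₀ hr₁ hx)).div_const x
  rw [Finset.sum_range_one, qMLCoeff_zero (abs_lt.2 ⟨by linarith, hq₁⟩), pow_zero, one_mul]
    at h_tail
  refine h_tail.congr_fun fun k ↦ ?_
  rw [qMLCoeff, pow_succ' r, pow_succ x, mul_assoc r]
  field_simp

theorem hasSum_qMLSeries_backward (hq₀ : 0 ≤ q) (hq₁ : q < 1) (hr₀ : 0 < r) (hr₁ : r ≤ 1)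
    (hx : |x| < 1) :
    HasSum (fun n ↦ qBinomCoeff q r⁻¹ (n + 1) * q ^ (n + 1) * qMLSeries q r (x * r ^ (n + 1)))
      (qPochInf q (r⁻¹ * q) / qPochInf q q - (1 - x) * qMLSeries q r x) := by
  have h_shifted : HasSum (fun k ↦ qPochInf q (r⁻¹ * (r ^ k * q)) / qPochInf q q * x ^ k)
      (x * qMLSeries q r x + qPochInf q (r⁻¹ * q) / qPochInf q q) := by
    have h_tail := (hasSum_qMLSeries hq₀ hq₁ hr₀.le hr₁ hx).mul_left x
    have h_succ (k : ℕ) : qPochInf q (r⁻¹ * (r ^ (k + 1) * q)) / qPochInf q q * x ^ (k + 1) =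
        x * (qMLCoeff q r k * x ^ k) := by
      rw [qMLCoeff, pow_succ' r, mul_assoc r, inv_mul_cancel_left₀ hr₀.ne']
      ring
    rw [← hasSum_nat_add_iff' 1, Finset.sum_range_one, pow_zero, pow_zero, one_mul, mul_one,
      add_sub_cancel_right]
    exact h_tail.congr_fun h_succ
  have h_full := hasSum_qBinomCoeff_mul_qMLSeries hq₀ hq₁ hr₀.le hr₁ hx h_shifted
  have h_value : x * qMLSeries q r x + qPochInf q (r⁻¹ * q) / qPochInf q q - qMLSeries q r x =
      qPochInf q (r⁻¹ * q) / qPochInf q q - (1 - x) * qMLSeries q r x := by ring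
  rw [← h_value]
  simpa using (hasSum_nat_add_iff' 1).2 h_full

end QMLSeries

section Bounds

/-- The weight of `S(w * r ^ (n + 1))` in the recursion `hasSum_qMLWeight_mul_qMLSeries` that
expresses `(1 + w) * S(w)` through the values of `S(w) = qMLSeries q r (-w)` closer to `0`. -/
noncomputable def qMLWeight (q r : ℝ) (n : ℕ) : ℝ := -(qBinomCoeff q r⁻¹ (n + 1) * q ^ (n + 1))

variable {q r w : ℝ}

theorem qPochInf_inv_mul_div_nonneg (hq₀ : 0 ≤ q) (hq₁ : q < 1) (hqr : q ≤ r) :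
    0 ≤ qPochInf q (r⁻¹ * q) / qPochInf q q :=
  div_nonneg (qPochInf_nonneg hq₀ hq₁ (inv_mul_le_one_of_le₀ hqr (hq₀.trans hqr)))
    (qPochInf_nonneg hq₀ hq₁ hq₁.le)

theorem qMLWeight_nonneg (hq₀ : 0 < q) (hqr : q ≤ r) (hr₁ : r ≤ 1) (n : ℕ) :
    0 ≤ qMLWeight q r n := by
  have h_coeff : qBinomCoeff q r⁻¹ (n + 1) ≤ 0 :=
    qBinomCoeff_succ_nonpos hq₀.le (hqr.trans hr₁) (one_le_inv_iff₀.2 ⟨hq₀.trans_le hqr, hr₁⟩)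
      (mul_inv_le_one_of_le₀ hqr (hq₀.le.trans hqr)) n
  exact neg_nonneg.2 (mul_nonpos_of_nonpos_of_nonneg h_coeff (by positivity))

theorem qMLWeight_zero_pos (hq₀ : 0 < q) (hqr : q ≤ r) (hr₁ : r < 1) : 0 < qMLWeight q r 0 := by
  have h_coeff : qBinomCoeff q r⁻¹ (0 + 1) = (1 - r⁻¹) / (1 - q) := by simp [qBinomCoeff, qPoch]
  have h_num : 1 - r⁻¹ < 0 := sub_neg.2 ((one_lt_inv₀ (hq₀.trans_le hqr)).2 hr₁)
  have h_den : 0 < 1 - q := sub_pos.2 (hqr.trans_lt hr₁)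
  rw [qMLWeight, h_coeff]
  exact neg_pos.2 (mul_neg_of_neg_of_pos (div_neg_of_neg_of_pos h_num h_den) (by positivity))

theorem hasSum_qMLWeight (hq : |q| < 1) (r : ℝ) :
    HasSum (qMLWeight q r) (1 - qPochInf q (r⁻¹ * q) / qPochInf q q) := by
  have h_tail := ((hasSum_nat_add_iff' 1).2 (hasSum_qBinomCoeff_mul_pow hq r⁻¹ hq)).neg
  rw [Finset.sum_range_one, qBinomCoeff_zero, pow_zero, one_mul, neg_sub] at h_tail
  exact h_tail

theorem hasSum_qMLWeight_mul_qMLSeries (hq₀ : 0 ≤ q) (hq₁ : q < 1) (hr₀ : 0 < r) (hr₁ : r ≤ 1)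
    (hw : |w| < 1) (m : ℕ) :
    HasSum (fun n ↦ qMLWeight q r n * qMLSeries q r (-(w * r ^ (m + n + 1))))
      ((1 + w * r ^ m) * qMLSeries q r (-(w * r ^ m)) -
        qPochInf q (r⁻¹ * q) / qPochInf q q) := by
  have hx : |-(w * r ^ m)| < 1 := by
    rw [abs_neg]
    exact abs_mul_pow_lt_one hr₀.le hr₁ hw m
  have h_neg := (hasSum_qMLSeries_backward hq₀ hq₁ hr₀ hr₁ hx).neg
  rw [neg_sub, sub_neg_eq_add] at h_neg
  refine h_neg.congr_fun fun n ↦ ?_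
  rw [qMLWeight, add_assoc m, pow_add r m, neg_mul, neg_mul, mul_assoc w]

theorem tendsto_qMLSeries_neg_mul_pow (hq₀ : 0 ≤ q) (hq₁ : q < 1) (hr₀ : 0 ≤ r) (hr₁ : r < 1)
    (hw : |w| < 1) : Tendsto (fun m : ℕ ↦ qMLSeries q r (-(w * r ^ m))) atTop (𝓝 1) := by
  simpa only [neg_mul] using tendsto_qMLSeries_mul_pow hq₀ hq₁ hr₀ hr₁ ((abs_neg w).trans_lt hw)

theorem qMLSeries_neg_mul_pow_pos (hq₀ : 0 < q) (hqr : q ≤ r) (hr₁ : r < 1) (hw₀ : 0 ≤ w)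
    (hw₁ : w < 1) (m : ℕ) : 0 < qMLSeries q r (-(w * r ^ m)) := by
  have hr₀ : 0 < r := hq₀.trans_le hqr
  have hq₁ : q < 1 := hqr.trans_lt hr₁
  have hw : |w| < 1 := abs_lt.2 ⟨by linarith, hw₁⟩
  exact pos_of_backward_recursion (hasSum_qMLWeight_mul_qMLSeries hq₀.le hq₁ hr₀ hr₁.le hw)
    (qMLWeight_nonneg hq₀ hqr hr₁.le) (qMLWeight_zero_pos hq₀ hqr hr₁)
    (qPochInf_inv_mul_div_nonneg hq₀.le hq₁ hqr) (fun m ↦ by positivity)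
    (tendsto_qMLSeries_neg_mul_pow hq₀.le hq₁ hr₀.le hr₁ hw) one_pos m

theorem monotone_qMLSeries_neg_mul_pow (hq₀ : 0 < q) (hqr : q ≤ r) (hr₁ : r < 1) (hw₀ : 0 < w)
    (hw₁ : w < 1) : Monotone fun m : ℕ ↦ qMLSeries q r (-(w * r ^ m)) := by
  have hr₀ : 0 < r := hq₀.trans_le hqr
  have hq₁ : q < 1 := hqr.trans_lt hr₁
  have hw : |w| < 1 := abs_lt.2 ⟨by linarith, hw₁⟩
  exact monotone_of_backward_recursion
    (hasSum_qMLWeight_mul_qMLSeries hq₀.le hq₁ hr₀ hr₁.le hw) (qMLWeight_nonneg hq₀ hqr hr₁.le)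
    (hasSum_qMLWeight (abs_lt.2 ⟨by linarith, hq₁⟩) r)
    (sub_le_self 1 (qPochInf_inv_mul_div_nonneg hq₀.le hq₁ hqr)) (fun m ↦ by positivity)
    (fun _ _ h ↦ mul_le_mul_of_nonneg_left (pow_le_pow_of_le_one hr₀.le hr₁.le h) hw₀.le)
    (fun m ↦ (qMLSeries_neg_mul_pow_pos hq₀ hqr hr₁ hw₀.le hw₁ m).le)
    (tendsto_qMLSeries_neg_mul_pow hq₀.le hq₁ hr₀.le hr₁ hw)

theorem qMLSeries_neg_pos (hq₀ : 0 < q) (hqr : q ≤ r) (hr₁ : r < 1) (hw₀ : 0 ≤ w)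
    (hw₁ : w < 1) : 0 < qMLSeries q r (-w) := by
  simpa using qMLSeries_neg_mul_pow_pos hq₀ hqr hr₁ hw₀ hw₁ 0

theorem hasSum_qBinomCoeff_mul_pow_self (hq : |q| < 1) (r : ℝ) :
    HasSum (fun n ↦ qBinomCoeff q r n * q ^ n) (qMLCoeff q r 1) := by
  simpa only [qMLCoeff, pow_one] using hasSum_qBinomCoeff_mul_pow hq r hq

theorem qMLCoeff_one_mul_qMLSeries_le (hq₀ : 0 < q) (hqr : q ≤ r) (hr₁ : r < 1) (hw₀ : 0 < w)
    (hw₁ : w < 1) : qMLCoeff q r 1 * w * qMLSeries q r (-w) ≤ 1 - qMLSeries q r (-w) := by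
  have hr₀ : 0 < r := hq₀.trans_le hqr
  have hq₁ : q < 1 := hqr.trans_lt hr₁
  have h_min (n : ℕ) : qMLSeries q r (-w) ≤ qMLSeries q r (-w * r ^ n) := by
    simpa using monotone_qMLSeries_neg_mul_pow hq₀ hqr hr₁ hw₀ hw₁ n.zero_le
  have h_sum := hasSum_qMLSeries_forward hq₀.le hq₁ hr₀.le hr₁.le
    (abs_lt.2 ⟨by linarith, by linarith⟩) (neg_ne_zero.2 hw₀.ne')
  have h_le : qMLCoeff q r 1 * qMLSeries q r (-w) ≤ (qMLSeries q r (-w) - 1) / -w :=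
    hasSum_le (fun n ↦ mul_le_mul_of_nonneg_left (h_min n)
        (mul_nonneg (qBinomCoeff_nonneg hq₀.le hq₁.le hr₁.le n) (by positivity)))
      ((hasSum_qBinomCoeff_mul_pow_self (abs_lt.2 ⟨by linarith, hq₁⟩) r).mul_right _) h_sum
  rw [div_neg, ← neg_div, neg_sub, le_div_iff₀ hw₀] at h_le
  linarith

end Bounds

section Gamma

variable {q : ℝ}

theorem inv_qGamma_mul_add_one (hq₀ : 0 < q) (hq₁ : q < 1) (α : ℝ) (k : ℕ) :
    (qGamma q (α * k + 1))⁻¹ = qMLCoeff q (q ^ α) k * ((1 - q) ^ α) ^ k := by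
  have hq : 0 ≤ 1 - q := by linarith
  rw [qGamma, qMLCoeff, Real.rpow_add hq₀, Real.rpow_mul hq₀.le, Real.rpow_one,
    Real.rpow_natCast, show 1 - (α * k + 1) = -(α * k) by ring, Real.rpow_neg hq,
    Real.rpow_mul hq, Real.rpow_natCast, mul_inv, inv_inv, inv_div]

theorem inv_qGamma_add_one (hq₀ : 0 < q) (hq₁ : q < 1) (α : ℝ) :
    (qGamma q (α + 1))⁻¹ = qMLCoeff q (q ^ α) 1 * (1 - q) ^ α := by
  simpa using inv_qGamma_mul_add_one hq₀ hq₁ α 1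

theorem qML_one_eq_qMLSeries (hq₀ : 0 < q) (hq₁ : q < 1) (α z : ℝ) :
    qML q α 1 z = qMLSeries q (q ^ α) ((1 - q) ^ α * z) := by
  refine tsum_congr fun k ↦ ?_
  rw [div_eq_mul_inv, inv_qGamma_mul_add_one hq₀ hq₁, mul_pow]
  ring

end Gamma

theorem one_sub_qML_bounds_general (q α : ℝ) (hq₀ : 0 < q) (hq₁ : q < 1)
    (hα₀ : 0 < α) (hα₁ : α ≤ 1) (z : ℝ) (hz₀ : 0 < z) (hz₁ : z < (1 - q) ^ (-α)) :
    ((qGamma q (α + 1))⁻¹ * z) / (1 + (qGamma q (α + 1))⁻¹ * z) ≤ 1 - qML q α 1 (-z) ∧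
      1 - qML q α 1 (-z) < 1 := by
  have hqr : q ≤ q ^ α := Real.self_le_rpow_of_le_one hq₀.le hq₁.le hα₁
  have hr₁ : q ^ α < 1 := Real.rpow_lt_one hq₀.le hq₁ hα₀
  have h_scale : 0 < (1 - q) ^ α := Real.rpow_pos_of_pos (sub_pos.2 hq₁) α
  have hw₀ : 0 < (1 - q) ^ α * z := mul_pos h_scale hz₀
  have hw₁ : (1 - q) ^ α * z < 1 := by
    rwa [Real.rpow_neg (sub_pos.2 hq₁).le, lt_inv_comm₀ hz₀ h_scale, ← one_div,
      lt_div_iff₀ hz₀] at hz₁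
  have h_coeff : 0 ≤ qMLCoeff q (q ^ α) 1 * ((1 - q) ^ α * z) :=
    mul_nonneg (qMLCoeff_nonneg hq₀.le hq₁ (hq₀.le.trans hqr) hr₁.le 1) hw₀.le
  have h_bound := qMLCoeff_one_mul_qMLSeries_le hq₀ hqr hr₁ hw₀ hw₁
  rw [qML_one_eq_qMLSeries hq₀ hq₁, inv_qGamma_add_one hq₀ hq₁, mul_assoc, mul_neg]
  refine ⟨?_, sub_lt_self 1 (qMLSeries_neg_pos hq₀ hqr hr₁ hw₀.le hw₁)⟩
  rw [div_le_iff₀ (by linarith)]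
  linarith

theorem one_sub_qML_bounds (q α : ℝ) (hq0 : 0 < q) (hq1 : q < 1)
    (hα0 : 0 < α) (hα1 : α < 1) :
    ∀ z : ℝ, 0 < z → z < (1 - q) ^ (-α) →
      ((qGamma q (α + 1))⁻¹ * z) / (1 + (qGamma q (α + 1))⁻¹ * z)
        ≤ 1 - qML q α 1 (-z) ∧ 1 - qML q α 1 (-z) < 1 :=
  one_sub_qML_bounds_general q α hq0 hq1 hα0 hα1.le
end
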